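/- If a topological space E is τ-Baire, then the product space E × E is a Baire space. -/

import Mathlib

universe u v w

section Tandem

variable {E : Type*} [TopologicalSpace E]

/-- The `n`-th move of a play of the tandem Banach–Mazur game, which is played in
the order `V₁, V₁', W₁, W₁', V₂, V₂', W₂, W₂', …` : player β' chooses the sets `Vᵢ`
(indices `≡ 0 [MOD 4]`) and `Wᵢ` (indices `≡ 2 [MOD 4]`), player α' chooses the sets
`Vᵢ'` (indices `≡ 1 [MOD 4]`) and `Wᵢ'` (indices `≡ 3 [MOD 4]`). -/
def tandemMove (V V' W W' : ℕ → Set E) (n : ℕ) : Set E :=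
  if n % 4 = 0 then V (n / 4)
  else if n % 4 = 1 then V' (n / 4)
  else if n % 4 = 2 then W (n / 4)
  else W' (n / 4)

/-- The history of the first `n` moves of a tandem play (as a function that is `∅`
from index `n` onwards, so that a strategy can only use the past moves). -/
def tandemHist (V V' W W' : ℕ → Set E) (n : ℕ) : ℕ → Set E :=
  fun i => if i < n then tandemMove V V' W W' i else ∅

/-- A legal tandem history of length `n`: all moves are nonempty open sets, the moves
on the `V`-board (indices `≡ 0, 1 [MOD 4]`) are nested decreasingly, and so are the
moves on the `W`-board (indices `≡ 2, 3 [MOD 4]`). -/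
def TandemLegalHist (n : ℕ) (h : ℕ → Set E) : Prop :=
  (∀ i < n, IsOpen (h i) ∧ (h i).Nonempty) ∧
  (∀ i j : ℕ, i < j → j < n → i % 4 < 2 → j % 4 < 2 → h j ⊆ h i) ∧
  (∀ i j : ℕ, i < j → j < n → 2 ≤ i % 4 → 2 ≤ j % 4 → h j ⊆ h i)

/-- A strategy for player β' in the tandem game: to every legal history of even length
it assigns a nonempty open set, contained in the previous move on the same board
(the first moves `V₁` and `W₁`, at positions `0` and `2`, are unconstrained). -/
def IsTandemBetaStrat (σ : ℕ → (ℕ → Set E) → Set E) : Prop :=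
  ∀ (n : ℕ) (h : ℕ → Set E), TandemLegalHist n h → n % 2 = 0 →
    IsOpen (σ n h) ∧ (σ n h).Nonempty ∧ (4 ≤ n → σ n h ⊆ h (n - 3))

/-- A strategy for player α' in the tandem game: to every legal history of odd length
it assigns a nonempty open subset of the immediately preceding move. -/
def IsTandemAlphaStrat (σ : ℕ → (ℕ → Set E) → Set E) : Prop :=
  ∀ (n : ℕ) (h : ℕ → Set E), TandemLegalHist n h → n % 2 = 1 →
    IsOpen (σ n h) ∧ (σ n h).Nonempty ∧ σ n h ⊆ h (n - 1)

/-- The play `(V, V', W, W')` follows the β'-strategy `σ`. -/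
def TandemFollowsBeta (σ : ℕ → (ℕ → Set E) → Set E) (V V' W W' : ℕ → Set E) : Prop :=
  ∀ k : ℕ, V k = σ (4 * k) (tandemHist V V' W W' (4 * k)) ∧
    W k = σ (4 * k + 2) (tandemHist V V' W W' (4 * k + 2))

/-- The play `(V, V', W, W')` follows the α'-strategy `σ`. -/
def TandemFollowsAlpha (σ : ℕ → (ℕ → Set E) → Set E) (V V' W W' : ℕ → Set E) : Prop :=
  ∀ k : ℕ, V' k = σ (4 * k + 1) (tandemHist V V' W W' (4 * k + 1)) ∧
    W' k = σ (4 * k + 3) (tandemHist V V' W W' (4 * k + 3))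

end Tandem

/-- A space is *τ-Baire* if for every strategy of player β' in the tandem
Banach–Mazur game there is a strategy of player α' which beats it, i.e. in their
play both `⋂ k, V k` and `⋂ k, W k` are nonempty. -/
def TauBaire (E : Type*) [TopologicalSpace E] : Prop :=
  ∀ σβ : ℕ → (ℕ → Set E) → Set E, IsTandemBetaStrat σβ →
    ∃ σα : ℕ → (ℕ → Set E) → Set E, IsTandemAlphaStrat σα ∧
      ∀ V V' W W' : ℕ → Set E,
        TandemFollowsBeta σβ V V' W W' → TandemFollowsAlpha σα V V' W W' →
        (⋂ k, V k).Nonempty ∧ (⋂ k, W k).Nonempty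

/-! To see that open dense sets `D 0, D 1, …` meet an open box `R₀` in a common point, let β' play
the two sides of a box on the two boards: first those of `R₀` and then, once α' has answered with
`V'` and `W'`, those of a box inside `(V' ×ˢ W') ∩ D k`. Both sides of the new box are fixed before
its first side is played, which is possible because β' has already seen both answers of α'. When α'
wins, a point of `⋂ Vₖ` and a point of `⋂ Wₖ` form a point of `R₀` that lies in every `D k`. -/

section History

variable {E : Type*}

/-- The history of the first `n` moves of a play given as a single sequence `m` of moves. As in
`tandemHist`, the entries from index `n` onwards are `∅`. -/
def histOf (m : ℕ → Set E) (n : ℕ) : ℕ → Set E :=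
  fun i => if i < n then m i else ∅

theorem histOf_of_lt (m : ℕ → Set E) {i n : ℕ} (hi : i < n) : histOf m n i = m i :=
  if_pos hi

theorem tandemHist_eq_histOf (m : ℕ → Set E) (n : ℕ) :
    tandemHist (fun k => m (4 * k)) (fun k => m (4 * k + 1)) (fun k => m (4 * k + 2))
      (fun k => m (4 * k + 3)) n = histOf m n := by
  funext i
  have hmove : tandemMove (fun k => m (4 * k)) (fun k => m (4 * k + 1)) (fun k => m (4 * k + 2))
      (fun k => m (4 * k + 3)) i = m i := by
    unfold tandemMove
    split_ifs <;> exact congrArg m (by omega)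
  simp only [tandemHist, histOf, hmove]

/-- The play in which every move is given by the rule `τ` applied to the history so far. -/
def playOf (τ : ℕ → (ℕ → Set E) → Set E) (n : ℕ) : Set E :=
  τ n (fun i => if i < n then playOf τ i else ∅)

theorem playOf_eq (τ : ℕ → (ℕ → Set E) → Set E) (n : ℕ) :
    playOf τ n = τ n (histOf (playOf τ) n) := by
  rw [playOf]
  rfl

/-- The play of the strategy `σβ`, moving at even positions, against `σα`, moving at odd ones. -/
def tandemPlay (σβ σα : ℕ → (ℕ → Set E) → Set E) : ℕ → Set E :=
  playOf fun n h => if n % 2 = 0 then σβ n h else σα n h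

theorem tandemPlay_of_even (σβ σα : ℕ → (ℕ → Set E) → Set E) {n : ℕ} (hn : n % 2 = 0) :
    tandemPlay σβ σα n = σβ n (histOf (tandemPlay σβ σα) n) :=
  (playOf_eq _ n).trans (if_pos hn)

theorem tandemPlay_of_odd (σβ σα : ℕ → (ℕ → Set E) → Set E) {n : ℕ} (hn : n % 2 = 1) :
    tandemPlay σβ σα n = σα n (histOf (tandemPlay σβ σα) n) :=
  (playOf_eq _ n).trans (if_neg (by omega))

end History

section Legality

variable {E : Type*} [TopologicalSpace E] {n : ℕ} {h : ℕ → Set E}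

theorem tandemLegalHist_iff :
    TandemLegalHist n h ↔ (∀ i < n, IsOpen (h i) ∧ (h i).Nonempty) ∧
      ∀ i j, i < j → j < n → (i % 4 < 2 ↔ j % 4 < 2) → h j ⊆ h i := by
  refine and_congr_right fun _ =>
    ⟨fun ⟨hV, hW⟩ i j hij hj hboard => ?_, fun hsub => ⟨fun i j hij hj hi hj' => ?_,
      fun i j hij hj hi hj' => ?_⟩⟩
  · by_cases hi : i % 4 < 2
    · exact hV i j hij hj hi (hboard.1 hi)
    · exact hW i j hij hj (not_lt.1 hi) (not_lt.1 (mt hboard.2 hi))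
  · exact hsub i j hij hj (iff_of_true hi hj')
  · exact hsub i j hij hj (iff_of_false hi.not_gt hj'.not_gt)

theorem TandemLegalHist.subset (H : TandemLegalHist n h) {i j : ℕ} (hij : i ≤ j) (hj : j < n)
    (hboard : i % 4 < 2 ↔ j % 4 < 2) : h j ⊆ h i := by
  obtain rfl | hlt := hij.eq_or_lt
  · rfl
  · exact (tandemLegalHist_iff.1 H).2 i j hlt hj hboard

theorem tandemLegalHist_zero (h : ℕ → Set E) : TandemLegalHist 0 h := by
  simp [TandemLegalHist]

theorem TandemLegalHist.histOf (H : TandemLegalHist n h) : TandemLegalHist n (histOf h n) := by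
  rw [tandemLegalHist_iff] at H ⊢
  refine ⟨fun i hi => ?_, fun i j hij hj hboard => ?_⟩
  · rw [histOf_of_lt h hi]
    exact H.1 i hi
  · rw [histOf_of_lt h hj, histOf_of_lt h (hij.trans hj)]
    exact H.2 i j hij hj hboard

theorem TandemLegalHist.succ (H : TandemLegalHist n h) (hopen : IsOpen (h n))
    (hne : (h n).Nonempty) (hsub : ∀ i < n, (i % 4 < 2 ↔ n % 4 < 2) → h n ⊆ h i) :
    TandemLegalHist (n + 1) h := by
  refine tandemLegalHist_iff.2 ⟨fun i hi => ?_, fun i j hij hj hboard => ?_⟩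
  · obtain hi | rfl := Nat.lt_succ_iff_lt_or_eq.1 hi
    · exact H.1 i hi
    · exact ⟨hopen, hne⟩
  · obtain hj | rfl := Nat.lt_succ_iff_lt_or_eq.1 hj
    · exact H.subset hij.le hj hboard
    · exact hsub i hij hboard

theorem TandemLegalHist.succ_of_even (H : TandemLegalHist n h) (hn : n % 2 = 0)
    (hopen : IsOpen (h n)) (hne : (h n).Nonempty) (hsub : 4 ≤ n → h n ⊆ h (n - 3)) :
    TandemLegalHist (n + 1) h :=
  H.succ hopen hne fun _ _ _ =>
    (hsub (by omega)).trans (H.subset (by omega) (by omega) (by omega))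

theorem TandemLegalHist.succ_of_odd (H : TandemLegalHist n h) (hn : n % 2 = 1)
    (hopen : IsOpen (h n)) (hne : (h n).Nonempty) (hsub : h n ⊆ h (n - 1)) :
    TandemLegalHist (n + 1) h :=
  H.succ hopen hne fun _ _ _ => hsub.trans (H.subset (by omega) (by omega) (by omega))

theorem tandemLegalHist_tandemPlay {σβ σα : ℕ → (ℕ → Set E) → Set E}
    (hβ : IsTandemBetaStrat σβ) (hα : IsTandemAlphaStrat σα) (n : ℕ) :
    TandemLegalHist n (tandemPlay σβ σα) := by
  induction n with
  | zero => exact tandemLegalHist_zero _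
  | succ n ih =>
    obtain hn | hn := Nat.mod_two_eq_zero_or_one n
    · obtain ⟨hopen, hne, hsub⟩ := hβ n _ ih.histOf hn
      rw [← tandemPlay_of_even σβ σα hn] at hopen hne hsub
      refine ih.succ_of_even hn hopen hne fun h4 => ?_
      exact (hsub h4).trans_eq (histOf_of_lt _ (by omega))
    · obtain ⟨hopen, hne, hsub⟩ := hα n _ ih.histOf hn
      rw [← tandemPlay_of_odd σβ σα hn] at hopen hne hsub
      exact ih.succ_of_odd hn hopen hne (hsub.trans_eq (histOf_of_lt _ (by omega)))

theorem TauBaire.exists_play (hE : TauBaire E) {σβ : ℕ → (ℕ → Set E) → Set E}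
    (hβ : IsTandemBetaStrat σβ) :
    ∃ m : ℕ → Set E, (∀ n, TandemLegalHist n m) ∧ (∀ n, n % 2 = 0 → m n = σβ n (histOf m n)) ∧
      (⋂ k, m (4 * k)).Nonempty ∧ (⋂ k, m (4 * k + 2)).Nonempty := by
  obtain ⟨σα, hα, hwin⟩ := hE σβ hβ
  refine ⟨tandemPlay σβ σα, tandemLegalHist_tandemPlay hβ hα,
    fun n hn => tandemPlay_of_even σβ σα hn, ?_⟩
  refine hwin _ (fun k => tandemPlay σβ σα (4 * k + 1)) _ (fun k => tandemPlay σβ σα (4 * k + 3))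
    (fun k => ?_) (fun k => ?_)
  · rw [tandemHist_eq_histOf, tandemHist_eq_histOf]
    exact ⟨tandemPlay_of_even σβ σα (by omega), tandemPlay_of_even σβ σα (by omega)⟩
  · rw [tandemHist_eq_histOf, tandemHist_eq_histOf]
    exact ⟨tandemPlay_of_odd σβ σα (by omega), tandemPlay_of_odd σβ σα (by omega)⟩

end Legality

section OpenBox

variable {X Y : Type*} [TopologicalSpace X] [TopologicalSpace Y]

/-- Nonempty open boxes `R.1 ×ˢ R.2` in a product space, encoded by their pairs of sides, so that
`R ≤ S` is inclusion on both sides. -/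
def IsOpenBox (R : Set X × Set Y) : Prop :=
  (IsOpen R.1 ∧ R.1.Nonempty) ∧ IsOpen R.2 ∧ R.2.Nonempty

theorem exists_isOpenBox_prod_subset {U : Set (X × Y)} (hU : IsOpen U) (hne : U.Nonempty) :
    ∃ R : Set X × Set Y, IsOpenBox R ∧ R.1 ×ˢ R.2 ⊆ U := by
  obtain ⟨⟨x, y⟩, hxy⟩ := hne
  obtain ⟨A, B, hA, hB, hxA, hyB, hAB⟩ := isOpen_prod_iff.1 hU x y hxy
  exact ⟨(A, B), ⟨⟨hA, x, hxA⟩, hB, y, hyB⟩, hAB⟩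

theorem IsOpenBox.exists_le_prod_subset {R : Set X × Set Y} (hR : IsOpenBox R) {D : Set (X × Y)}
    (hDo : IsOpen D) (hD : Dense D) :
    ∃ S : Set X × Set Y, IsOpenBox S ∧ S ≤ R ∧ S.1 ×ˢ S.2 ⊆ D := by
  obtain ⟨⟨hR₁, hne₁⟩, hR₂, hne₂⟩ := hR
  have hRo : IsOpen (R.1 ×ˢ R.2) := hR₁.prod hR₂
  obtain ⟨S, hS, hsub⟩ := exists_isOpenBox_prod_subset (hRo.inter hDo)
    (hD.inter_open_nonempty _ hRo (hne₁.prod hne₂))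
  obtain ⟨hSR, hSD⟩ := Set.subset_inter_iff.1 hsub
  exact ⟨S, hS, (Set.prod_subset_prod_iff' (hS.1.2.prod hS.2.2)).1 hSR, hSD⟩

end OpenBox

section BoxStrategy

variable {E : Type*} (R₀ : Set E × Set E) (shrink : ℕ → Set E × Set E → Set E × Set E)

/-- The box whose sides β' plays in round `k` of the box strategy: `R₀` at first, and then the box
that the rule `shrink` assigns to the pair of answers of α' in the previous round. -/
def boxOfRound (h : ℕ → Set E) : ℕ → Set E × Set E
  | 0 => R₀
  | k + 1 => shrink k (h (4 * k + 1), h (4 * k + 3))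

theorem boxOfRound_histOf (m : ℕ → Set E) {k n : ℕ} (hkn : 4 * k ≤ n) :
    boxOfRound R₀ shrink (histOf m n) k = boxOfRound R₀ shrink m k := by
  cases k with
  | zero => rfl
  | succ k =>
    simp only [boxOfRound]
    rw [histOf_of_lt m (by omega), histOf_of_lt m (by omega)]

/-- The strategy of player β' that in round `k` plays the two sides of `boxOfRound R₀ shrink h k`,
the first one on the `V`-board and the second one on the `W`-board. -/
def boxStrat (n : ℕ) (h : ℕ → Set E) : Set E :=
  if n % 4 = 0 then (boxOfRound R₀ shrink h (n / 4)).1 else (boxOfRound R₀ shrink h (n / 4)).2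

theorem boxStrat_four_mul (h : ℕ → Set E) (k : ℕ) :
    boxStrat R₀ shrink (4 * k) h = (boxOfRound R₀ shrink h k).1 := by
  rw [boxStrat, if_pos (by omega), show 4 * k / 4 = k by omega]

theorem boxStrat_four_mul_add_two (h : ℕ → Set E) (k : ℕ) :
    boxStrat R₀ shrink (4 * k + 2) h = (boxOfRound R₀ shrink h k).2 := by
  rw [boxStrat, if_neg (by omega), show (4 * k + 2) / 4 = k by omega]

variable {R₀ shrink} [TopologicalSpace E] {n : ℕ} {h : ℕ → Set E}

theorem TandemLegalHist.isOpenBox_answers (H : TandemLegalHist n h) {k : ℕ} (hk : 4 * k + 4 ≤ n) :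
    IsOpenBox (h (4 * k + 1), h (4 * k + 3)) :=
  ⟨H.1 _ (by omega), H.1 _ (by omega)⟩

theorem TandemLegalHist.isOpenBox_boxOfRound (H : TandemLegalHist n h) (hR₀ : IsOpenBox R₀)
    (hshrink : ∀ k R, IsOpenBox R → IsOpenBox (shrink k R)) {k : ℕ} (hk : 4 * k ≤ n) :
    IsOpenBox (boxOfRound R₀ shrink h k) := by
  cases k with
  | zero => exact hR₀
  | succ k => exact hshrink k _ (H.isOpenBox_answers hk)

theorem isTandemBetaStrat_boxStrat (hR₀ : IsOpenBox R₀)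
    (hshrink : ∀ k R, IsOpenBox R → IsOpenBox (shrink k R))
    (hle : ∀ k R, IsOpenBox R → shrink k R ≤ R) : IsTandemBetaStrat (boxStrat R₀ shrink) := by
  intro n h H hn
  obtain ⟨k, rfl | rfl⟩ : ∃ k, n = 4 * k ∨ n = 4 * k + 2 := ⟨n / 4, by omega⟩
  · have hbox := H.isOpenBox_boxOfRound hR₀ hshrink le_rfl
    rw [boxStrat_four_mul]
    refine ⟨hbox.1.1, hbox.1.2, fun hk => ?_⟩
    obtain ⟨k, rfl⟩ := Nat.exists_eq_add_of_le' (show 1 ≤ k by omega)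
    exact (hle k _ (H.isOpenBox_answers le_rfl)).1
  · have hbox := H.isOpenBox_boxOfRound hR₀ hshrink (Nat.le_add_right (4 * k) 2)
    rw [boxStrat_four_mul_add_two]
    refine ⟨hbox.2.1, hbox.2.2, fun hk => ?_⟩
    obtain ⟨k, rfl⟩ := Nat.exists_eq_add_of_le' (show 1 ≤ k by omega)
    exact (hle k _ (H.isOpenBox_answers (by omega))).2

theorem TauBaire.exists_forall_mem_shrink (hE : TauBaire E) (hR₀ : IsOpenBox R₀)
    (hshrink : ∀ k R, IsOpenBox R → IsOpenBox (shrink k R))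
    (hle : ∀ k R, IsOpenBox R → shrink k R ≤ R) :
    ∃ z ∈ R₀.1 ×ˢ R₀.2, ∀ k, ∃ R, IsOpenBox R ∧ z ∈ (shrink k R).1 ×ˢ (shrink k R).2 := by
  obtain ⟨m, hlegal, hm, ⟨x, hx⟩, y, hy⟩ :=
    hE.exists_play (isTandemBetaStrat_boxStrat hR₀ hshrink hle)
  rw [Set.mem_iInter] at hx hy
  have hV (k : ℕ) : m (4 * k) = (boxOfRound R₀ shrink m k).1 := by
    rw [hm _ (by omega), boxStrat_four_mul, boxOfRound_histOf _ _ _ le_rfl]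
  have hW (k : ℕ) : m (4 * k + 2) = (boxOfRound R₀ shrink m k).2 := by
    rw [hm _ (by omega), boxStrat_four_mul_add_two, boxOfRound_histOf _ _ _ (by omega)]
  have hmem (k : ℕ) : (x, y) ∈ (boxOfRound R₀ shrink m k).1 ×ˢ (boxOfRound R₀ shrink m k).2 :=
    ⟨hV k ▸ hx k, hW k ▸ hy k⟩
  exact ⟨(x, y), hmem 0, fun k => ⟨_, (hlegal _).isOpenBox_answers le_rfl, hmem (k + 1)⟩⟩

end BoxStrategy

/-- If `E` is τ-Baire, then `E × E` is a Baire space. -/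
theorem baireSpace_prod_self_of_tauBaire (E : Type u) [TopologicalSpace E]
    (hE : TauBaire E) : BaireSpace (E × E) := by
  refine ⟨fun D hDo hD => dense_iff_inter_open.2 fun U hU hUne => ?_⟩
  obtain ⟨R₀, hR₀, hR₀U⟩ := exists_isOpenBox_prod_subset hU hUne
  have hrefine (k : ℕ) (R : Set E × Set E) (hR : IsOpenBox R) :
      ∃ S : Set E × Set E, IsOpenBox S ∧ S ≤ R ∧ S.1 ×ˢ S.2 ⊆ D k :=
    hR.exists_le_prod_subset (hDo k) (hD k)
  choose! shrink hshrink hle hsub using hrefine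
  obtain ⟨z, hz, hmem⟩ := hE.exists_forall_mem_shrink hR₀ hshrink hle
  refine ⟨z, hR₀U hz, Set.mem_iInter.2 fun k => ?_⟩
  obtain ⟨R, hR, hzR⟩ := hmem k
  exact hsub k R hR hzR
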